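/- Let 𝒯₀ be an E-closed property (Cl_E(𝒯₀) = 𝒯₀) and let 𝒯'₀ ⊆ 𝒯₀ be a generating set for 𝒯₀, i.e., Cl_E(𝒯'₀) = 𝒯₀. The following are equivalent: (1) 𝒯'₀ is the least generating set for 𝒯₀ (it is contained in every generating set for 𝒯₀); (2) 𝒯'₀ is a minimal generating set for 𝒯₀ (no proper subset of 𝒯'₀ generates 𝒯₀); (3) every theory in 𝒯'₀ is isolated inside 𝒯'₀ by some sentence, i.e., for every T ∈ 𝒯'₀ there is φ ∈ T with (𝒯'₀)_φ = {T}; (4) every theory in 𝒯'₀ is isolated inside 𝒯₀ by some sentence, i.e., for every T ∈ 𝒯'₀ there is φ ∈ T with (𝒯₀)_φ = {T}. -/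

import Mathlib

/-!
`ClE` is closure in the Stone space of complete theories, whose basic open sets are the sets of
theories containing a given sentence. A set `P` of complete theories is dense in `ClE P`, so a point
isolated in `P` stays isolated in `ClE P`, and a point isolated in `ClE P` belongs to every dense
subset. Conversely, removing a non-isolated point from `P` leaves the closure unchanged.
-/

open FirstOrder Language

/-- The E-closure of a property `P`: the set of complete theories `T` such that every sentence
of `T` belongs to some theory of `P`. -/
def ClE {L : FirstOrder.Language} (P : Set L.Theory) : Set L.Theory :=
  {T | T.IsMaximal ∧ ∀ φ ∈ T, ∃ T' ∈ P, φ ∈ T'}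

section

variable {L : FirstOrder.Language} {P Q : Set L.Theory} {S T : L.Theory}

theorem inf_mem_iff_of_isMaximal (hT : T.IsMaximal) {φ ψ : L.Sentence} :
    (φ ⊓ ψ : L.Sentence) ∈ T ↔ φ ∈ T ∧ ψ ∈ T := by
  simp only [hT.mem_iff_models, Theory.models_sentence_iff, Sentence.realize_inf, forall_and]

theorem eq_of_subset_of_isMaximal (hS : S.IsMaximal) (hT : T.IsSatisfiable) (hST : S ⊆ T) : S = T :=
  hST.antisymm fun φ hφ ↦ (hS.mem_or_not_mem φ).resolve_right fun hφS ↦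
    Theory.CompleteType.false_of_mem_of_not_mem hT hφ (hST hφS)

-- A union, since a member of `Q` lies in `ClE Q` only if it is complete.
theorem clE_subset_clE (h : P ⊆ Q ∪ ClE Q) : ClE P ⊆ ClE Q := by
  refine fun T hT ↦ ⟨hT.1, fun φ hφ ↦ ?_⟩
  obtain ⟨S, hSP, hφS⟩ := hT.2 φ hφ
  rcases h hSP with hSQ | hSQ
  · exact ⟨S, hSQ, hφS⟩
  · exact hSQ.2 φ hφS

theorem clE_mono (h : P ⊆ Q) : ClE P ⊆ ClE Q :=
  clE_subset_clE (h.trans Set.subset_union_left)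

theorem clE_sdiff_singleton (hT : T ∈ ClE (P \ {T})) : ClE (P \ {T}) = ClE P := by
  refine (clE_mono Set.sdiff_subset).antisymm (clE_subset_clE fun S hS ↦ ?_)
  by_cases hST : S = T
  · exact Or.inr (hST ▸ hT)
  · exact Or.inl ⟨hS, hST⟩

/-- `T` is isolated in the property `P`: some sentence singles out `T` among the members of `P`.
Membership of `T` in `P` is part of the condition. -/
def IsIsolatedIn (P : Set L.Theory) (T : L.Theory) : Prop :=
  ∃ φ ∈ T, {T' ∈ P | φ ∈ T'} = {T}

theorem isIsolatedIn_iff_unique :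
    IsIsolatedIn P T ↔ T ∈ P ∧ ∃ φ ∈ T, ∀ S ∈ P, φ ∈ S → S = T := by
  simp only [IsIsolatedIn, Set.eq_singleton_iff_unique_mem, Set.mem_ofPred_eq, and_imp]
  grind

theorem IsIsolatedIn.mem_of_mem_clE (h : IsIsolatedIn P T) (hQP : Q ⊆ P) (hT : T ∈ ClE Q) :
    T ∈ Q := by
  obtain ⟨-, φ, hφ, hunique⟩ := isIsolatedIn_iff_unique.1 h
  obtain ⟨S, hSQ, hφS⟩ := hT.2 φ hφ
  exact hunique S (hQP hSQ) hφS ▸ hSQ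

theorem isIsolatedIn_iff_notMem_clE_sdiff (hTP : T ∈ P) (hT : T.IsMaximal) :
    IsIsolatedIn P T ↔ T ∉ ClE (P \ {T}) := by
  refine ⟨fun h hcl ↦ (h.mem_of_mem_clE Set.sdiff_subset hcl).2 rfl, fun h ↦ ?_⟩
  obtain ⟨φ, hφ, hsep⟩ : ∃ φ ∈ T, ∀ S ∈ P \ {T}, φ ∉ S := by
    by_contra! hcl
    exact h ⟨hT, hcl⟩
  refine isIsolatedIn_iff_unique.2 ⟨hTP, φ, hφ, fun S hSP hφS ↦ ?_⟩
  by_contra hST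
  exact hsep S ⟨hSP, hST⟩ hφS

theorem IsIsolatedIn.clE (hP : ∀ S ∈ P, S.IsMaximal) (h : IsIsolatedIn P T) :
    IsIsolatedIn (ClE P) T := by
  obtain ⟨hTP, φ, hφ, hunique⟩ := isIsolatedIn_iff_unique.1 h
  have hT : T.IsMaximal := hP T hTP
  refine isIsolatedIn_iff_unique.2
    ⟨⟨hT, fun ψ hψ ↦ ⟨T, hTP, hψ⟩⟩, φ, hφ, fun S hS hφS ↦ eq_of_subset_of_isMaximal hS.1 hT.1 ?_⟩
  intro ψ hψS
  -- A member of `P` witnessing `φ ⊓ ψ` can only be `T`, hence `ψ ∈ T`.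
  obtain ⟨R, hRP, hR⟩ := hS.2 (φ ⊓ ψ) ((inf_mem_iff_of_isMaximal hS.1).2 ⟨hφS, hψS⟩)
  obtain ⟨hφR, hψR⟩ := (inf_mem_iff_of_isMaximal (hP R hRP)).1 hR
  exact hunique R hRP hφR ▸ hψR

end

/-- For a generating set 𝒯'₀ of an E-closed family 𝒯₀ (i.e. 𝒯'₀ ⊆ 𝒯₀ and Cl_E(𝒯'₀) = 𝒯₀), TFAE:
(1) 𝒯'₀ is the least generating set; (2) 𝒯'₀ is a minimal generating set; (3) every theory of
𝒯'₀ is isolated in 𝒯'₀ by some sentence; (4) every theory of 𝒯'₀ is isolated in 𝒯₀ by some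
sentence. -/
theorem least_generating_tfae {L : FirstOrder.Language} (𝒯₀ 𝒯'₀ : Set L.Theory)
    (hE : ClE 𝒯₀ = 𝒯₀) (hsub : 𝒯'₀ ⊆ 𝒯₀) (hgen : ClE 𝒯'₀ = 𝒯₀) :
    List.TFAE
      [∀ 𝒯' : Set L.Theory, 𝒯' ⊆ 𝒯₀ → ClE 𝒯' = 𝒯₀ → 𝒯'₀ ⊆ 𝒯',
       ∀ 𝒯' : Set L.Theory, 𝒯' ⊂ 𝒯'₀ → ClE 𝒯' ≠ 𝒯₀,
       ∀ T ∈ 𝒯'₀, ∃ φ ∈ T, {T' ∈ 𝒯'₀ | φ ∈ T'} = {T},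
       ∀ T ∈ 𝒯'₀, ∃ φ ∈ T, {T' ∈ 𝒯₀ | φ ∈ T'} = {T}] := by
  have hcl : 𝒯'₀ ⊆ ClE 𝒯'₀ := hsub.trans_eq hgen.symm
  have hmax : ∀ T ∈ 𝒯'₀, T.IsMaximal := fun T hT ↦ (hcl hT).1
  tfae_have 1 → 2 := fun hleast 𝒯' hss hgen' ↦
    hss.not_subset (hleast 𝒯' (hss.subset.trans hsub) hgen')
  tfae_have 2 → 3 := fun hmin T hT ↦
    (isIsolatedIn_iff_notMem_clE_sdiff hT (hmax T hT)).2 fun hTcl ↦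
      hmin (𝒯'₀ \ {T}) (Set.sdiff_singleton_ssubset.2 hT) ((clE_sdiff_singleton hTcl).trans hgen)
  tfae_have 3 → 4 := fun hiso T hT ↦ hgen ▸ IsIsolatedIn.clE hmax (hiso T hT)
  tfae_have 4 → 1 := fun hiso 𝒯' hsub' hgen' T hT ↦
    IsIsolatedIn.mem_of_mem_clE (hiso T hT) hsub' (hgen'.symm ▸ hsub hT)
  tfae_finish
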